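/- Every element of U(q) can be written in the form S(a,b,c) for a unique triple (a,b,c) ∈ F_q^3; in particular, the map (a,b,c) ↦ S(a,b,c) is a bijection from F_q^3 onto U(q), and |U(q)| = q^3. -/

import Mathlib

open Matrix

noncomputable section

namespace ReePaper

variable {F : Type*} [Field F] [Fintype F]

/-- The matrix `α(x)`. -/
def amat (t : ℕ) (x : F) : Matrix (Fin 7) (Fin 7) F :=
  !![1, x^t, 0, 0, -x^(3*t+1), -x^(3*t+2), x^(4*t+2);
     0, 1, x, x^(t+1), -x^(2*t+1), 0, -x^(3*t+2);
     0, 0, 1, x^t, -x^(2*t), 0, x^(3*t+1);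
     0, 0, 0, 1, x^t, 0, 0;
     0, 0, 0, 0, 1, -x, x^(t+1);
     0, 0, 0, 0, 0, 1, -x^t;
     0, 0, 0, 0, 0, 0, 1]

/-- The matrix `β(x)`. -/
def bmat (t : ℕ) (x : F) : Matrix (Fin 7) (Fin 7) F :=
  !![1, 0, -x^t, 0, -x, 0, -x^(t+1);
     0, 1, 0, x^t, 0, -x^(2*t), 0;
     0, 0, 1, 0, 0, 0, x;
     0, 0, 0, 1, 0, x^t, 0;
     0, 0, 0, 0, 1, 0, x^t;
     0, 0, 0, 0, 0, 1, 0;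
     0, 0, 0, 0, 0, 0, 1]

/-- The matrix `γ(x)`. -/
def cmat (t : ℕ) (x : F) : Matrix (Fin 7) (Fin 7) F :=
  !![1, 0, 0, -x^t, 0, -x, -x^(2*t);
     0, 1, 0, 0, -x^t, 0, x;
     0, 0, 1, 0, 0, x^t, 0;
     0, 0, 0, 1, 0, 0, -x^t;
     0, 0, 0, 0, 1, 0, 0;
     0, 0, 0, 0, 0, 1, 0;
     0, 0, 0, 0, 0, 0, 1]

/-- The diagonal matrix `h(λ)`. -/
def hmat (t : ℕ) (l : Fˣ) : Matrix (Fin 7) (Fin 7) F :=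
  Matrix.diagonal ![((l ^ (t : ℤ) : Fˣ) : F), ((l ^ (1 - (t : ℤ)) : Fˣ) : F),
    ((l ^ (2 * (t : ℤ) - 1) : Fˣ) : F), 1, ((l ^ (1 - 2 * (t : ℤ)) : Fˣ) : F),
    ((l ^ ((t : ℤ) - 1) : Fˣ) : F), ((l ^ (-(t : ℤ)) : Fˣ) : F)]

/-- The matrix `Υ`, the antidiagonal matrix with all entries `-1`. -/
def ups : Matrix (Fin 7) (Fin 7) F :=
  !![0, 0, 0, 0, 0, 0, -1;
     0, 0, 0, 0, 0, -1, 0;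
     0, 0, 0, 0, -1, 0, 0;
     0, 0, 0, -1, 0, 0, 0;
     0, 0, -1, 0, 0, 0, 0;
     0, -1, 0, 0, 0, 0, 0;
     -1, 0, 0, 0, 0, 0, 0]

/-- `S(a, b, c) = α(a) β(b) γ(c)`. -/
def Smat (t : ℕ) (a b c : F) : Matrix (Fin 7) (Fin 7) F :=
  amat t a * bmat t b * cmat t c

/-- The Ree group `Ree(q) = ⟨α(x), β(x), γ(x), h(λ), Υ⟩ ≤ GL(7, q)`. -/
def ReeGroup (t : ℕ) : Subgroup (GL (Fin 7) F) :=
  Subgroup.closure {g : GL (Fin 7) F |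
    (∃ x : F, (g : Matrix (Fin 7) (Fin 7) F) = amat t x) ∨
    (∃ x : F, (g : Matrix (Fin 7) (Fin 7) F) = bmat t x) ∨
    (∃ x : F, (g : Matrix (Fin 7) (Fin 7) F) = cmat t x) ∨
    (∃ l : Fˣ, (g : Matrix (Fin 7) (Fin 7) F) = hmat t l) ∨
    (g : Matrix (Fin 7) (Fin 7) F) = ups}

/-- The subgroup `U(q) = ⟨α(x), β(x), γ(x)⟩`. -/
def Usub (t : ℕ) : Subgroup (GL (Fin 7) F) :=
  Subgroup.closure {g : GL (Fin 7) F |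
    (∃ x : F, (g : Matrix (Fin 7) (Fin 7) F) = amat t x) ∨
    (∃ x : F, (g : Matrix (Fin 7) (Fin 7) F) = bmat t x) ∨
    (∃ x : F, (g : Matrix (Fin 7) (Fin 7) F) = cmat t x)}

/-- The subgroup `H(q) = {h(λ) : λ ∈ F_q^×}`. -/
def Hsub (t : ℕ) : Subgroup (GL (Fin 7) F) :=
  Subgroup.closure {g : GL (Fin 7) F |
    ∃ l : Fˣ, (g : Matrix (Fin 7) (Fin 7) F) = hmat t l}

end ReePaper

open ReePaper

/-!
Only three properties of the map `θ : x ↦ x ^ t` matter: it is a ring endomorphism, the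
characteristic is three, and `θ (θ x) ^ 3 = x`. They make the `γ(x)` central in `U` and let `α(x)`
and `β(y)` commute up to some `γ(z)`, while `α(a) α(x) = α(a + x) β(y) γ(z)` for suitable `y` and
`z`. Moving every `α` to the left and every `γ` to the right, one sees that the matrices
`S(a, b, c)` are closed under multiplication and inversion. The first two rows of `S(a, b, c)`
determine `a`, `θ b` and `θ c`.
-/

namespace ReePaper

section TitsEndomorphism

variable {R : Type*} [CommRing R]

/-- Tits endomorphisms in characteristic three: the square of `θ` is inverse to the Frobenius
endomorphism. -/
def IsTitsEndomorphism (θ : R →+* R) : Prop :=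
  ∀ x, θ (θ x) ^ 3 = x

theorem IsTitsEndomorphism.injective {θ : R →+* R} (hθ : IsTitsEndomorphism θ) :
    Function.Injective θ := fun x y hxy => by
  rw [← hθ x, hxy, hθ y]

/-- The root element `α(x)` of the Ree group attached to an endomorphism `θ` of a commutative ring;
`amat t` is the case where `θ` raises to the power `t`. -/
def alphaMat (θ : R →+* R) (x : R) : Matrix (Fin 7) (Fin 7) R :=
  !![1, θ x, 0, 0, -(θ x ^ 3 * x), -(θ x ^ 3 * x ^ 2), θ x ^ 4 * x ^ 2;
     0, 1, x, θ x * x, -(θ x ^ 2 * x), 0, -(θ x ^ 3 * x ^ 2);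
     0, 0, 1, θ x, -θ x ^ 2, 0, θ x ^ 3 * x;
     0, 0, 0, 1, θ x, 0, 0;
     0, 0, 0, 0, 1, -x, θ x * x;
     0, 0, 0, 0, 0, 1, -θ x;
     0, 0, 0, 0, 0, 0, 1]

/-- The root element `β(x)` attached to `θ`, generalizing `bmat`. -/
def betaMat (θ : R →+* R) (x : R) : Matrix (Fin 7) (Fin 7) R :=
  !![1, 0, -θ x, 0, -x, 0, -(θ x * x);
     0, 1, 0, θ x, 0, -θ x ^ 2, 0;
     0, 0, 1, 0, 0, 0, x;
     0, 0, 0, 1, 0, θ x, 0;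
     0, 0, 0, 0, 1, 0, θ x;
     0, 0, 0, 0, 0, 1, 0;
     0, 0, 0, 0, 0, 0, 1]

/-- The root element `γ(x)` attached to `θ`, generalizing `cmat`. -/
def gammaMat (θ : R →+* R) (x : R) : Matrix (Fin 7) (Fin 7) R :=
  !![1, 0, 0, -θ x, 0, -x, -θ x ^ 2;
     0, 1, 0, 0, -θ x, 0, x;
     0, 0, 1, 0, 0, θ x, 0;
     0, 0, 0, 1, 0, 0, -θ x;
     0, 0, 0, 0, 1, 0, 0;
     0, 0, 0, 0, 0, 1, 0;
     0, 0, 0, 0, 0, 0, 1]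

/-- The product `S(a, b, c) = α(a) β(b) γ(c)` attached to `θ`, generalizing `Smat`. -/
def unipotentMat (θ : R →+* R) (a b c : R) : Matrix (Fin 7) (Fin 7) R :=
  alphaMat θ a * betaMat θ b * gammaMat θ c

/-- The group generated by all `α(x)`, `β(x)` and `γ(x)` attached to `θ`, generalizing `Usub`. -/
def unipotent (θ : R →+* R) : Subgroup (GL (Fin 7) R) :=
  Subgroup.closure {g : GL (Fin 7) R |
    (∃ x, (g : Matrix (Fin 7) (Fin 7) R) = alphaMat θ x) ∨
    (∃ x, (g : Matrix (Fin 7) (Fin 7) R) = betaMat θ x) ∨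
    (∃ x, (g : Matrix (Fin 7) (Fin 7) R) = gammaMat θ x)}

variable (θ : R →+* R)

@[simp]
theorem alphaMat_zero : alphaMat θ 0 = 1 := by
  ext i j
  fin_cases i <;> fin_cases j <;> simp [alphaMat]

@[simp]
theorem betaMat_zero : betaMat θ 0 = 1 := by
  ext i j
  fin_cases i <;> fin_cases j <;> simp [betaMat]

@[simp]
theorem gammaMat_zero : gammaMat θ 0 = 1 := by
  ext i j
  fin_cases i <;> fin_cases j <;> simp [gammaMat]

theorem unipotentMat_alpha (a : R) : unipotentMat θ a 0 0 = alphaMat θ a := by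
  simp [unipotentMat]

theorem unipotentMat_beta (b : R) : unipotentMat θ 0 b 0 = betaMat θ b := by
  simp [unipotentMat]

theorem unipotentMat_gamma (c : R) : unipotentMat θ 0 0 c = gammaMat θ c := by
  simp [unipotentMat]

theorem unipotentMat_zero : unipotentMat θ 0 0 0 = 1 := by
  simp [unipotentMat]

theorem unipotentMat_apply_one_two (a b c : R) : unipotentMat θ a b c 1 2 = a := by
  simp [unipotentMat, alphaMat, betaMat, gammaMat]

theorem unipotentMat_apply_zero_two (a b c : R) : unipotentMat θ a b c 0 2 = -θ b := by
  simp [unipotentMat, alphaMat, betaMat, gammaMat]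

theorem unipotentMat_apply_zero_three (a b c : R) :
    unipotentMat θ a b c 0 3 = -θ c + θ a * θ b := by
  simp [unipotentMat, alphaMat, betaMat, gammaMat]

variable {θ} in
theorem unipotentMat_injective (hθ : Function.Injective θ) :
    Function.Injective fun abc : R × R × R => unipotentMat θ abc.1 abc.2.1 abc.2.2 := by
  rintro ⟨a, b, c⟩ ⟨x, y, z⟩ h
  have hentry (i j : Fin 7) : unipotentMat θ a b c i j = unipotentMat θ x y z i j :=
    congr_fun₂ h i j
  obtain rfl : a = x := by
    simpa only [unipotentMat_apply_one_two] using hentry 1 2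
  obtain rfl : b = y := hθ <| by
    simpa only [unipotentMat_apply_zero_two, neg_inj] using hentry 0 2
  obtain rfl : c = z := hθ <| by
    simpa only [unipotentMat_apply_zero_three, add_left_inj, neg_inj] using hentry 0 3
  rfl

theorem gammaMat_mul_alphaMat (c x : R) :
    gammaMat θ c * alphaMat θ x = alphaMat θ x * gammaMat θ c := by
  ext i j
  fin_cases i <;> fin_cases j <;>
    simp only [alphaMat, gammaMat, mul_apply, Fin.sum_univ_seven, of_apply, cons_val,
      Fin.reduceFinMk] <;>
    ring

theorem gammaMat_mul_betaMat (c y : R) :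
    gammaMat θ c * betaMat θ y = betaMat θ y * gammaMat θ c := by
  ext i j
  fin_cases i <;> fin_cases j <;>
    simp only [betaMat, gammaMat, mul_apply, Fin.sum_univ_seven, of_apply, cons_val,
      Fin.reduceFinMk] <;>
    ring

section CharThree

variable [CharP R 3]

theorem betaMat_mul_betaMat (b y : R) : betaMat θ b * betaMat θ y = betaMat θ (b + y) := by
  ext i j
  fin_cases i <;> fin_cases j <;>
    simp only [betaMat, mul_apply, Fin.sum_univ_seven, of_apply, cons_val, Fin.reduceFinMk,
      map_add] <;>
    grind

theorem gammaMat_mul_gammaMat (c z : R) : gammaMat θ c * gammaMat θ z = gammaMat θ (c + z) := by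
  ext i j
  fin_cases i <;> fin_cases j <;>
    simp only [gammaMat, mul_apply, Fin.sum_univ_seven, of_apply, cons_val, Fin.reduceFinMk,
      map_add] <;>
    grind

theorem betaMat_mul_alphaMat (b x : R) :
    betaMat θ b * alphaMat θ x = alphaMat θ x * betaMat θ b * gammaMat θ (-(x * b)) := by
  ext i j
  fin_cases i <;> fin_cases j <;>
    simp only [alphaMat, betaMat, gammaMat, mul_apply, Fin.sum_univ_seven, of_apply, cons_val,
      Fin.reduceFinMk, map_neg, map_mul] <;>
    grind

variable {θ}

theorem alphaMat_mul_alphaMat (hθ : IsTitsEndomorphism θ) (a x : R) :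
    alphaMat θ a * alphaMat θ x =
      alphaMat θ (a + x) * betaMat θ (-(a * θ x ^ 3)) *
        gammaMat θ (a * x * θ x ^ 3 - a ^ 2 * θ x ^ 3) := by
  ext i j
  fin_cases i <;> fin_cases j <;>
    simp only [alphaMat, betaMat, gammaMat, mul_apply, Fin.sum_univ_seven, of_apply, cons_val,
      Fin.reduceFinMk, map_add, map_sub, map_neg, map_mul, map_pow, hθ x] <;>
    grind

theorem unipotentMat_mul (hθ : IsTitsEndomorphism θ) (a b c x y z : R) :
    unipotentMat θ a b c * unipotentMat θ x y z =
      unipotentMat θ (a + x) (b + y - a * θ x ^ 3)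
        (c + z - x * b + a * x * θ x ^ 3 - a ^ 2 * θ x ^ 3) := by
  calc unipotentMat θ a b c * unipotentMat θ x y z
      = alphaMat θ a * betaMat θ b * (gammaMat θ c * alphaMat θ x) * betaMat θ y *
          gammaMat θ z := by
        simp only [unipotentMat, Matrix.mul_assoc]
    _ = alphaMat θ a * (betaMat θ b * alphaMat θ x) * (gammaMat θ c * betaMat θ y) *
          gammaMat θ z := by
        simp only [gammaMat_mul_alphaMat, Matrix.mul_assoc]
    _ = (alphaMat θ a * alphaMat θ x) * betaMat θ b * (gammaMat θ (-(x * b)) * betaMat θ y) *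
          (gammaMat θ c * gammaMat θ z) := by
        rw [betaMat_mul_alphaMat, gammaMat_mul_betaMat θ c]
        simp only [Matrix.mul_assoc]
    _ = alphaMat θ (a + x) * betaMat θ (-(a * θ x ^ 3)) *
          (gammaMat θ (a * x * θ x ^ 3 - a ^ 2 * θ x ^ 3) * (betaMat θ b * betaMat θ y)) *
          (gammaMat θ (-(x * b)) * (gammaMat θ c * gammaMat θ z)) := by
        rw [alphaMat_mul_alphaMat hθ, gammaMat_mul_betaMat θ (-(x * b))]
        simp only [Matrix.mul_assoc]
    _ = alphaMat θ (a + x) * (betaMat θ (-(a * θ x ^ 3)) * betaMat θ (b + y)) *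
          (gammaMat θ (a * x * θ x ^ 3 - a ^ 2 * θ x ^ 3) *
            gammaMat θ (-(x * b) + (c + z))) := by
        rw [betaMat_mul_betaMat θ b, gammaMat_mul_betaMat, gammaMat_mul_gammaMat θ c,
          gammaMat_mul_gammaMat θ (-(x * b))]
        simp only [Matrix.mul_assoc]
    _ = unipotentMat θ (a + x) (b + y - a * θ x ^ 3)
          (c + z - x * b + a * x * θ x ^ 3 - a ^ 2 * θ x ^ 3) := by
        rw [betaMat_mul_betaMat, gammaMat_mul_gammaMat, unipotentMat]
        ring_nf

theorem unipotentMat_mul_eq_one (hθ : IsTitsEndomorphism θ) (a b c : R) :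
    unipotentMat θ a b c *
        unipotentMat θ (-a) (-b - a * θ a ^ 3) (-c - a * b - 2 * a ^ 2 * θ a ^ 3) = 1 := by
  rw [unipotentMat_mul hθ, map_neg, ← unipotentMat_zero θ]
  congr 1 <;> ring

theorem isUnit_unipotentMat (hθ : IsTitsEndomorphism θ) (a b c : R) :
    IsUnit (unipotentMat θ a b c) :=
  IsUnit.of_mul_eq_one _ (unipotentMat_mul_eq_one hθ a b c)

theorem mem_unipotent_of_coe_eq (hθ : IsTitsEndomorphism θ) {g : GL (Fin 7) R} {a b c : R}
    (hg : (g : Matrix (Fin 7) (Fin 7) R) = unipotentMat θ a b c) : g ∈ unipotent θ := by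
  obtain ⟨gα, hα⟩ := isUnit_unipotentMat hθ a 0 0
  obtain ⟨gβ, hβ⟩ := isUnit_unipotentMat hθ 0 b 0
  obtain ⟨gγ, hγ⟩ := isUnit_unipotentMat hθ 0 0 c
  rw [unipotentMat_alpha] at hα
  rw [unipotentMat_beta] at hβ
  rw [unipotentMat_gamma] at hγ
  have hfactor : g = gα * gβ * gγ :=
    Units.ext (by rw [hg, Units.val_mul, Units.val_mul, hα, hβ, hγ, unipotentMat])
  rw [hfactor]
  exact mul_mem (mul_mem (Subgroup.subset_closure (.inl ⟨a, hα⟩))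
    (Subgroup.subset_closure (.inr (.inl ⟨b, hβ⟩))))
    (Subgroup.subset_closure (.inr (.inr ⟨c, hγ⟩)))

theorem exists_coe_eq_unipotentMat (hθ : IsTitsEndomorphism θ) {g : GL (Fin 7) R}
    (hg : g ∈ unipotent θ) :
    ∃ a b c, (g : Matrix (Fin 7) (Fin 7) R) = unipotentMat θ a b c := by
  induction hg using Subgroup.closure_induction with
  | mem g hg =>
    rcases hg with ⟨x, hx⟩ | ⟨x, hx⟩ | ⟨x, hx⟩
    · exact ⟨x, 0, 0, hx.trans (unipotentMat_alpha θ x).symm⟩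
    · exact ⟨0, x, 0, hx.trans (unipotentMat_beta θ x).symm⟩
    · exact ⟨0, 0, x, hx.trans (unipotentMat_gamma θ x).symm⟩
  | one => exact ⟨0, 0, 0, (unipotentMat_zero θ).symm⟩
  | mul g g' _ _ ihg ihg' =>
    obtain ⟨a, b, c, hg⟩ := ihg
    obtain ⟨x, y, z, hg'⟩ := ihg'
    exact ⟨_, _, _, by rw [Units.val_mul, hg, hg', unipotentMat_mul hθ]⟩
  | inv g _ ih =>
    obtain ⟨a, b, c, hg⟩ := ih
    exact ⟨_, _, _, Units.inv_eq_of_mul_eq_one_right (hg ▸ unipotentMat_mul_eq_one hθ a b c)⟩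

theorem coe_image_unipotent (hθ : IsTitsEndomorphism θ) :
    ((↑) : GL (Fin 7) R → Matrix (Fin 7) (Fin 7) R) '' (unipotent θ : Set (GL (Fin 7) R)) =
      Set.range fun abc : R × R × R => unipotentMat θ abc.1 abc.2.1 abc.2.2 := by
  ext M
  constructor
  · rintro ⟨g, hg, rfl⟩
    obtain ⟨a, b, c, h⟩ := exists_coe_eq_unipotentMat hθ hg
    exact ⟨(a, b, c), h.symm⟩
  · rintro ⟨⟨a, b, c⟩, rfl⟩
    obtain ⟨g, hg⟩ := isUnit_unipotentMat hθ a b c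
    exact ⟨g, mem_unipotent_of_coe_eq hθ hg, hg⟩

end CharThree

end TitsEndomorphism

section Field

variable {F : Type*} [Field F] {t : ℕ} {θ : F →+* F}

theorem amat_eq_alphaMat (hθ : ∀ x, θ x = x ^ t) (x : F) : amat t x = alphaMat θ x := by
  simp only [amat, alphaMat, hθ, pow_add, pow_mul', pow_one]

theorem bmat_eq_betaMat (hθ : ∀ x, θ x = x ^ t) (x : F) : bmat t x = betaMat θ x := by
  simp only [bmat, betaMat, hθ, pow_add, pow_mul', pow_one]

theorem cmat_eq_gammaMat (hθ : ∀ x, θ x = x ^ t) (x : F) : cmat t x = gammaMat θ x := by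
  simp only [cmat, gammaMat, hθ, pow_mul']

theorem Smat_eq_unipotentMat (hθ : ∀ x, θ x = x ^ t) (a b c : F) :
    Smat t a b c = unipotentMat θ a b c := by
  simp only [Smat, unipotentMat, amat_eq_alphaMat hθ, bmat_eq_betaMat hθ, cmat_eq_gammaMat hθ]

theorem Usub_eq_unipotent (hθ : ∀ x, θ x = x ^ t) : Usub (F := F) t = unipotent θ := by
  simp only [Usub, unipotent, amat_eq_alphaMat hθ, bmat_eq_betaMat hθ, cmat_eq_gammaMat hθ]

theorem isTitsEndomorphism_iterateFrobenius [Fintype F] [CharP F 3] {m : ℕ}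
    (hF : Fintype.card F = 3 ^ (2 * m + 1)) : IsTitsEndomorphism (iterateFrobenius F 3 m) := by
  intro x
  calc ((x ^ 3 ^ m) ^ 3 ^ m) ^ 3 = x ^ Fintype.card F := by rw [hF, ← pow_mul, ← pow_mul]; ring_nf
    _ = x := FiniteField.pow_card x

end Field

end ReePaper

theorem usub_param_general {R : Type*} [CommRing R] [CharP R 3] {θ : R →+* R}
    (hθ : IsTitsEndomorphism θ) :
    (∀ abc : R × R × R, ∃ g : GL (Fin 7) R, g ∈ unipotent θ ∧
      (g : Matrix (Fin 7) (Fin 7) R) = unipotentMat θ abc.1 abc.2.1 abc.2.2) ∧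
    (∀ g : GL (Fin 7) R, g ∈ unipotent θ →
      ∃! abc : R × R × R, (g : Matrix (Fin 7) (Fin 7) R) =
        unipotentMat θ abc.1 abc.2.1 abc.2.2) ∧
    Nat.card (unipotent θ) = Nat.card R ^ 3 := by
  have hinj := unipotentMat_injective hθ.injective
  have himage := coe_image_unipotent hθ
  refine ⟨fun abc => himage.ge ⟨abc, rfl⟩, fun g hg => ?_, ?_⟩
  · obtain ⟨abc, habc⟩ := himage.le ⟨g, hg, rfl⟩
    exact ⟨abc, habc.symm, fun xyz hxyz => hinj (hxyz.symm.trans habc.symm)⟩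
  · calc Nat.card (unipotent θ)
        = Nat.card (((↑) : GL (Fin 7) R → Matrix (Fin 7) (Fin 7) R) '' unipotent θ) :=
          (Nat.card_image_of_injective Units.val_injective _).symm
      _ = Nat.card (R × R × R) := by rw [himage, Nat.card_range_of_injective hinj]
      _ = Nat.card R ^ 3 := by rw [Nat.card_prod, Nat.card_prod]; ring

/-- Every element of `U(q)` is `S(a,b,c)` for a unique triple `(a,b,c)`; the map
`(a,b,c) ↦ S(a,b,c)` is a bijection from `F_q^3` onto `U(q)`, and `|U(q)| = q^3`. -/
theorem usub_param (m : ℕ) (hm : 0 < m) (F : Type*) [Field F] [Fintype F]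
    (hF : Fintype.card F = 3 ^ (2 * m + 1)) :
    (∀ abc : F × F × F, ∃ g : GL (Fin 7) F, g ∈ Usub (F := F) (3 ^ m) ∧
      (g : Matrix (Fin 7) (Fin 7) F) = Smat (3 ^ m) abc.1 abc.2.1 abc.2.2) ∧
    (∀ g : GL (Fin 7) F, g ∈ Usub (F := F) (3 ^ m) →
      ∃! abc : F × F × F, (g : Matrix (Fin 7) (Fin 7) F) = Smat (3 ^ m) abc.1 abc.2.1 abc.2.2) ∧
    Nat.card ↥(Usub (F := F) (3 ^ m)) = (3 ^ (2 * m + 1)) ^ 3 := by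
  have := Fact.mk Nat.prime_three
  have : CharP F 3 := charP_of_card_eq_prime_pow hF
  simpa only [Smat_eq_unipotentMat (iterateFrobenius_def 3 m),
    Usub_eq_unipotent (iterateFrobenius_def 3 m), Nat.card_eq_fintype_card, hF] using
    usub_param_general (isTitsEndomorphism_iterateFrobenius hF)
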